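/- arXiv:2210.05128 — 4 statements merged into one kernel-verified Lean document; each statement's English description precedes it below -/
import Mathlib

section
/- Let A be a real m×n matrix (m ≥ 1) all of whose rows are nonzero, b ∈ ℝ^m, x ∈ ℝ^n, p ∈ [1,∞), η ∈ (0,1]. Set ε = η · max_{1≤i≤m} |b^{(i)} − A^{(i)}x|^p / ‖A^{(i)}‖_p^p, let τ = { i : |b^{(i)} − A^{(i)}x|^p ≥ ε‖A^{(i)}‖_p^p }, and define ξ = Σ_{i∈τ} (b^{(i)} − A^{(i)}x) e_i. Assume Aᵀξ ≠ 0. Then (ξᵀ(b − Ax))² / ‖Aᵀξ‖₂² ≥ ε^{2/p} · (Σ_{i∈τ} ‖A^{(i)}‖_p²) / ‖A_τ‖², where ‖A_τ‖ is the ℓ²→ℓ² operator norm (largest singular value) of the row submatrix A_τ of A with rows indexed by τ. -/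
open Matrix Finset

/-- The ℓ²→ℓ² operator norm (largest singular value) of a real matrix. -/
noncomputable def sigmaMax {ι : Type} [Fintype ι] {n : ℕ}
    (M : Matrix ι (Fin n) ℝ) : ℝ :=
  ‖LinearMap.toContinuousLinearMap (Matrix.toEuclideanLin M)‖

/-- The row submatrix of `A` consisting of the rows indexed by `τ`. -/
def rowSubmatrix {m n : ℕ} (A : Matrix (Fin m) (Fin n) ℝ) (τ : Finset (Fin m)) :
    Matrix {i : Fin m // i ∈ τ} (Fin n) ℝ := fun i j => A i.1 j

/-- The transpose of `M` is bounded by the ℓ²→ℓ² operator norm of `M`. -/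
theorem sum_sq_transpose_mulVec_le {ι : Type} [Fintype ι] {n : ℕ}
    (M : Matrix ι (Fin n) ℝ) (v : ι → ℝ) :
    ∑ j, (M.transpose.mulVec v j) ^ 2 ≤ sigmaMax M ^ 2 * ∑ i, v i ^ 2 := by
  set w := M.transpose.mulVec v
  have hpair : ∑ j, w j ^ 2 = ∑ i, v i * M.mulVec w i := by
    have h : w ⬝ᵥ w = v ⬝ᵥ M.mulVec w := by
      rw [dotProduct_mulVec v, ← mulVec_transpose]
    simpa [dotProduct, sq] using h
  have hcs : (∑ i, v i * M.mulVec w i) ^ 2 ≤ (∑ i, v i ^ 2) * ∑ i, M.mulVec w i ^ 2 :=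
    Finset.sum_mul_sq_le_sq_mul_sq _ _ _
  have hop : ∑ i, M.mulVec w i ^ 2 ≤ sigmaMax M ^ 2 * ∑ j, w j ^ 2 := by
    have h := (LinearMap.toContinuousLinearMap (Matrix.toEuclideanLin M)).le_opNorm
      (WithLp.toLp 2 w)
    have h2 := pow_le_pow_left₀ (norm_nonneg _) h 2
    rw [mul_pow, EuclideanSpace.real_norm_sq_eq, EuclideanSpace.real_norm_sq_eq] at h2
    simpa [sigmaMax] using h2
  have hW : 0 ≤ ∑ j, w j ^ 2 := Finset.sum_nonneg fun _ _ => sq_nonneg _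
  have hV : 0 ≤ ∑ i, v i ^ 2 := Finset.sum_nonneg fun _ _ => sq_nonneg _
  rcases hW.eq_or_lt with h0 | hpos
  · rw [← h0]
    positivity
  · refine le_of_mul_le_mul_right ?_ hpos
    calc (∑ j, w j ^ 2) * ∑ j, w j ^ 2 = (∑ i, v i * M.mulVec w i) ^ 2 := by rw [← hpair, sq]
      _ ≤ (∑ i, v i ^ 2) * (sigmaMax M ^ 2 * ∑ j, w j ^ 2) :=
        hcs.trans (mul_le_mul_of_nonneg_left hop hV)
      _ = _ := by ring

/-- Taking the `2 / p` power of a bound on `|r| ^ p` bounds `r ^ 2`. -/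
theorem rpow_two_div_mul_le_sq {p ε s r : ℝ} (hp : 0 < p) (hε : 0 ≤ ε) (hs : 0 ≤ s)
    (h : ε * s ≤ |r| ^ p) : ε ^ (2 / p) * s ^ (2 / p) ≤ r ^ 2 := by
  rw [← Real.mul_rpow hε hs]
  calc (ε * s) ^ (2 / p) ≤ (|r| ^ p) ^ (2 / p) := by gcongr
    _ = r ^ 2 := by
      rw [← Real.rpow_mul (abs_nonneg r), mul_div_cancel₀ _ hp.ne', Real.rpow_two, sq_abs]

/-- Key per-step lower bound (inequality (2.11)) in the convergence analysis of
the fast greedy block Kaczmarz method: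
`(ξᵀ(b − Ax))² / ‖Aᵀξ‖₂² ≥ ε^{2/p} · (Σ_{i∈τ} ‖A⁽ⁱ⁾‖_p²) / ‖A_τ‖²`. -/
theorem fgbk_projection_lower_bound {m n : ℕ} (hm : 0 < m)
    (A : Matrix (Fin m) (Fin n) ℝ) (hA : ∀ i, A i ≠ 0)
    (b : Fin m → ℝ) (x : Fin n → ℝ)
    (p : ℝ) (hp : 1 ≤ p) (η : ℝ) (hη0 : 0 < η) (hη1 : η ≤ 1)
    (ε : ℝ)
    (hε : ε = η * Finset.univ.sup' ⟨⟨0, hm⟩, Finset.mem_univ _⟩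
      (fun i => |b i - A.mulVec x i| ^ p / ∑ j, |A i j| ^ p))
    (τ : Finset (Fin m))
    (hτ : ∀ i, i ∈ τ ↔ |b i - A.mulVec x i| ^ p ≥ ε * ∑ j, |A i j| ^ p)
    (ξ : Fin m → ℝ)
    (hξ : ξ = ∑ i ∈ τ, (b i - A.mulVec x i) • (Pi.single i 1 : Fin m → ℝ))
    (hAξ : A.transpose.mulVec ξ ≠ 0) :
    (ξ ⬝ᵥ (b - A.mulVec x)) ^ 2 / (∑ j, (A.transpose.mulVec ξ j) ^ 2) ≥
      ε ^ (2 / p) * (∑ i ∈ τ, (∑ j, |A i j| ^ p) ^ (2 / p)) /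
        (sigmaMax (rowSubmatrix A τ)) ^ 2 := by
  set r : Fin m → ℝ := b - A.mulVec x with hr
  have hp0 : 0 < p := by linarith
  have hs : ∀ i, 0 ≤ ∑ j, |A i j| ^ p := fun i => Finset.sum_nonneg fun _ _ => by positivity
  have hε0 : 0 ≤ ε := by
    rw [hε]
    exact mul_nonneg hη0.le ((div_nonneg (by positivity) (hs ⟨0, hm⟩)).trans
      (Finset.le_sup' (fun i => |b i - A.mulVec x i| ^ p / ∑ j, |A i j| ^ p)
        (Finset.mem_univ (⟨0, hm⟩ : Fin m))))
  have hξi : ∀ i, ξ i = if i ∈ τ then r i else 0 := by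
    intro i
    simp [hξ, hr, Finset.sum_apply, Pi.single_apply]
  have hdot : ξ ⬝ᵥ r = ∑ i ∈ τ, r i ^ 2 := by
    simp [dotProduct, hξi, sq, Finset.sum_ite_mem]
  have hT : ε ^ (2 / p) * (∑ i ∈ τ, (∑ j, |A i j| ^ p) ^ (2 / p)) ≤ ∑ i ∈ τ, r i ^ 2 := by
    rw [Finset.mul_sum]
    exact Finset.sum_le_sum fun i hi => rpow_two_div_mul_le_sq hp0 hε0 (hs i) ((hτ i).1 hi)
  have hrow : A.transpose.mulVec ξ =
      (rowSubmatrix A τ).transpose.mulVec (fun i : {i // i ∈ τ} => r i) := by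
    ext j
    have h := Finset.sum_coe_sort τ fun i => A i j * r i
    simp [mulVec, dotProduct, rowSubmatrix, hξi, Finset.sum_ite_mem, ← h]
  have hW : ∑ j, (A.transpose.mulVec ξ j) ^ 2 ≤
      sigmaMax (rowSubmatrix A τ) ^ 2 * ∑ i ∈ τ, r i ^ 2 := by
    rw [hrow, ← Finset.sum_coe_sort τ fun i => r i ^ 2]
    exact sum_sq_transpose_mulVec_le _ _
  have hWpos : 0 < ∑ j, (A.transpose.mulVec ξ j) ^ 2 := by
    obtain ⟨j, hj⟩ := Function.ne_iff.1 hAξ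
    exact Finset.sum_pos' (fun _ _ => sq_nonneg _) ⟨j, Finset.mem_univ j, sq_pos_iff.2 hj⟩
  have hS : 0 ≤ ∑ i ∈ τ, r i ^ 2 := Finset.sum_nonneg fun _ _ => sq_nonneg _
  have hσ : 0 < sigmaMax (rowSubmatrix A τ) ^ 2 :=
    pos_of_mul_pos_left (hWpos.trans_le hW) hS
  rw [hdot, ge_iff_le, div_le_div_iff₀ hσ hWpos]
  calc _ ≤ (∑ i ∈ τ, r i ^ 2) * (sigmaMax (rowSubmatrix A τ) ^ 2 * ∑ i ∈ τ, r i ^ 2) :=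
        mul_le_mul hT hW hWpos.le hS
    _ = _ := by ring
end

section
/- Let A be a real m×n matrix (m ≥ 1) all of whose rows are nonzero, let x* ∈ ℝ^n with A x* = b, and let σ > 0 satisfy ‖A u‖₂ ≥ σ‖u‖₂ for all u in the range of Aᵀ. Let x ∈ ℝ^n satisfy x − x* ∈ range(Aᵀ) and b − Ax ≠ 0, and let S ⊆ {1,…,m} be an index set with b^{(i)} − A^{(i)}x = 0 for all i ∈ S. Fix p ∈ [1,∞) and η ∈ (0,1], set ε = η · max_{1≤i≤m} |b^{(i)} − A^{(i)}x|^p / ‖A^{(i)}‖_p^p, τ = { i : |b^{(i)} − A^{(i)}x|^p ≥ ε‖A^{(i)}‖_p^p }, ξ = Σ_{i∈τ} (b^{(i)} − A^{(i)}x) e_i, and x' = x + (ξᵀ(b − Ax)/‖Aᵀξ‖₂²) Aᵀξ. Then ‖x' − x*‖₂² ≤ (1 − β σ²) ‖x − x*‖₂², where β = (η^{2/p} / Σ_{i∈{1,…,m}∖S} ‖A^{(i)}‖_p²) · (Σ_{i∈τ} ‖A^{(i)}‖_p²) / ‖A_τ‖², and ‖A_τ‖ is the ℓ²→ℓ² operator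 norm (largest singular value) of the row submatrix A_τ with rows indexed by τ. -/
open Matrix Finset

/-- The defining bound of the operator norm, in squared coordinate form. -/
lemma sum_sq_mulVec_le_sigmaMax {ι : Type} [Fintype ι] {n : ℕ}
    (M : Matrix ι (Fin n) ℝ) (v : Fin n → ℝ) :
    ∑ i, (M.mulVec v i) ^ 2 ≤ sigmaMax M ^ 2 * ∑ j, (v j) ^ 2 := by
  have h := (LinearMap.toContinuousLinearMap (Matrix.toEuclideanLin M)).le_opNorm
    (WithLp.toLp 2 v)
  have h2 := pow_le_pow_left₀ (norm_nonneg _) h 2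
  rw [mul_pow, EuclideanSpace.norm_sq_eq, EuclideanSpace.norm_sq_eq] at h2
  simpa [sigmaMax] using h2

lemma sum_sq_mulVec_mem_le_sigmaMax {m n : ℕ} (A : Matrix (Fin m) (Fin n) ℝ)
    (τ : Finset (Fin m)) (v : Fin n → ℝ) :
    ∑ i ∈ τ, (A.mulVec v i) ^ 2 ≤ sigmaMax (rowSubmatrix A τ) ^ 2 * ∑ j, (v j) ^ 2 := by
  refine le_trans (le_of_eq ?_) (sum_sq_mulVec_le_sigmaMax (rowSubmatrix A τ) v)
  rw [← Finset.sum_coe_sort]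
  rfl

/-- Norm bound for the transposed row block: `‖A_τᵀ ξ‖² ≤ ‖A_τ‖² ‖ξ‖²` for `ξ` supported on `τ`. -/
lemma sum_sq_transpose_mulVec_le_sigmaMax {m n : ℕ} (A : Matrix (Fin m) (Fin n) ℝ)
    (τ : Finset (Fin m)) (ξ : Fin m → ℝ) (hξ : ∀ i ∉ τ, ξ i = 0) :
    ∑ j, (A.transpose.mulVec ξ j) ^ 2 ≤
      sigmaMax (rowSubmatrix A τ) ^ 2 * ∑ i ∈ τ, (ξ i) ^ 2 := by
  set g := A.transpose.mulVec ξ with hg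
  have hG : ∑ j, (g j) ^ 2 = ∑ i ∈ τ, ξ i * A.mulVec g i := by
    calc ∑ j, (g j) ^ 2 = g ⬝ᵥ g := by simp [dotProduct, sq]
      _ = ξ ⬝ᵥ A.mulVec g := by
        rw [Matrix.dotProduct_mulVec ξ, ← Matrix.mulVec_transpose, ← hg]
      _ = ∑ i ∈ τ, ξ i * A.mulVec g i :=
        (Finset.sum_subset (Finset.subset_univ τ) fun i _ hi => by simp [hξ i hi]).symm
  have hcs := Finset.sum_mul_sq_le_sq_mul_sq τ ξ (A.mulVec g)
  rw [← hG] at hcs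
  have hL := sum_sq_mulVec_mem_le_sigmaMax A τ g
  have hR : 0 ≤ ∑ i ∈ τ, (ξ i) ^ 2 := Finset.sum_nonneg fun i _ => sq_nonneg _
  rcases (Finset.sum_nonneg fun j _ => sq_nonneg (g j) :
    0 ≤ ∑ j, (g j) ^ 2).eq_or_lt with h0 | hpos
  · rw [← h0]; positivity
  · refine le_of_mul_le_mul_right ?_ hpos
    nlinarith [mul_le_mul_of_nonneg_left hL hR]

lemma sq_eq_abs_rpow_rpow (a : ℝ) {p : ℝ} (hp : 0 < p) : a ^ 2 = (|a| ^ p) ^ (2 / p) := by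
  rw [← Real.rpow_mul (abs_nonneg a), mul_div_cancel₀ _ hp.ne']
  simp

/-- Per-iteration contraction bound of Theorem 2.1 for the fast greedy block
Kaczmarz method, where `S` plays the role of the previous control index set
`τ_{k−1}` on whose indices the current residual vanishes:
`‖x' − x*‖₂² ≤ (1 − β σ²)‖x − x*‖₂²` with
`β = (η^{2/p} / Σ_{i∉S} ‖A⁽ⁱ⁾‖_p²) · (Σ_{i∈τ} ‖A⁽ⁱ⁾‖_p²) / ‖A_τ‖²`. -/
theorem fgbk_contraction_theorem21 {m n : ℕ} (hm : 0 < m)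
    (A : Matrix (Fin m) (Fin n) ℝ) (hA : ∀ i, A i ≠ 0)
    (b : Fin m → ℝ) (xs : Fin n → ℝ) (hxs : A.mulVec xs = b)
    (σ : ℝ) (hσ0 : 0 < σ)
    (hσ : ∀ u : Fin n → ℝ, (∃ y : Fin m → ℝ, u = A.transpose.mulVec y) →
      σ * Real.sqrt (∑ j, (u j) ^ 2) ≤ Real.sqrt (∑ i, (A.mulVec u i) ^ 2))
    (x : Fin n → ℝ) (hx : ∃ y : Fin m → ℝ, x - xs = A.transpose.mulVec y)
    (hres : b - A.mulVec x ≠ 0)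
    (S : Finset (Fin m)) (hS : ∀ i ∈ S, b i - A.mulVec x i = 0)
    (p : ℝ) (hp : 1 ≤ p) (η : ℝ) (hη0 : 0 < η) (hη1 : η ≤ 1)
    (ε : ℝ)
    (hε : ε = η * Finset.univ.sup' ⟨⟨0, hm⟩, Finset.mem_univ _⟩
      (fun i => |b i - A.mulVec x i| ^ p / ∑ j, |A i j| ^ p))
    (τ : Finset (Fin m))
    (hτ : ∀ i, i ∈ τ ↔ |b i - A.mulVec x i| ^ p ≥ ε * ∑ j, |A i j| ^ p)
    (ξ : Fin m → ℝ)
    (hξ : ξ = ∑ i ∈ τ, (b i - A.mulVec x i) • (Pi.single i 1 : Fin m → ℝ))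
    (x' : Fin n → ℝ)
    (hx' : x' = x + ((ξ ⬝ᵥ (b - A.mulVec x)) / ∑ j, (A.transpose.mulVec ξ j) ^ 2) •
      A.transpose.mulVec ξ)
    (β : ℝ)
    (hβ : β = η ^ (2 / p) / (∑ i ∈ Sᶜ, (∑ j, |A i j| ^ p) ^ (2 / p)) *
      ((∑ i ∈ τ, (∑ j, |A i j| ^ p) ^ (2 / p)) / (sigmaMax (rowSubmatrix A τ)) ^ 2)) :
    ∑ j, (x' j - xs j) ^ 2 ≤ (1 - β * σ ^ 2) * ∑ j, (x j - xs j) ^ 2 := by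
  have hp0 : 0 < p := by linarith
  have hq : 0 ≤ 2 / p := by positivity
  have hN : ∀ i, 0 < ∑ j, |A i j| ^ p := fun i => by
    obtain ⟨j, hj⟩ := Function.ne_iff.1 (hA i)
    exact Finset.sum_pos' (fun _ _ => by positivity)
      ⟨j, Finset.mem_univ _, Real.rpow_pos_of_pos (abs_pos.2 hj) p⟩
  set r : Fin m → ℝ := fun i => b i - A.mulVec x i with hr
  have hAd : A.mulVec (x - xs) = -r := by
    rw [Matrix.mulVec_sub, hxs]; funext i; simp [hr]
  set N : Fin m → ℝ := fun i => ∑ j, |A i j| ^ p with hNdef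
  change ε = η * Finset.univ.sup' _ (fun i => |r i| ^ p / N i) at hε
  change ∀ i, i ∈ τ ↔ |r i| ^ p ≥ ε * N i at hτ
  change β = η ^ (2 / p) / (∑ i ∈ Sᶜ, N i ^ (2 / p)) *
    ((∑ i ∈ τ, N i ^ (2 / p)) / (sigmaMax (rowSubmatrix A τ)) ^ 2) at hβ
  obtain ⟨k, -, hk⟩ := Finset.exists_mem_eq_sup' (s := (Finset.univ : Finset (Fin m)))
    ⟨⟨0, hm⟩, Finset.mem_univ _⟩ (fun i => |r i| ^ p / N i)
  have hle : ∀ i, |r i| ^ p / N i ≤ |r k| ^ p / N k := fun i =>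
    hk ▸ Finset.le_sup' (fun i => |r i| ^ p / N i) (Finset.mem_univ i)
  rw [hk] at hε
  set M := |r k| ^ p / N k with hM
  have hMpos : 0 < M := by
    obtain ⟨i, hi⟩ := Function.ne_iff.1 hres
    have : 0 < |r i| ^ p / N i :=
      div_pos (Real.rpow_pos_of_pos (abs_pos.2 hi) p) (hN i)
    exact this.trans_le (hle i)
  have hεpos : 0 < ε := hε ▸ mul_pos hη0 hMpos
  have hkτ : k ∈ τ := by
    rw [hτ, hε, ge_iff_le, ← le_div_iff₀ (hN k), ← hM]
    exact mul_le_of_le_one_left hMpos.le hη1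
  have hξτ : ∀ i, ξ i = if i ∈ τ then r i else 0 := fun i => by
    simp [hξ, Finset.sum_apply, Pi.single_apply, hr]
  have hξsq : ∑ i ∈ τ, (ξ i) ^ 2 = ∑ i ∈ τ, (r i) ^ 2 :=
    Finset.sum_congr rfl fun i hi => by simp [hξτ, hi]
  have hξr : ξ ⬝ᵥ r = ∑ i ∈ τ, (r i) ^ 2 := by
    simp [dotProduct, hξτ, Finset.sum_ite_mem, sq]
  -- the selected residual entries dominate the threshold
  have hRQ : η ^ (2 / p) * M ^ (2 / p) * ∑ i ∈ τ, N i ^ (2 / p) ≤ ∑ i ∈ τ, (r i) ^ 2 := by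
    rw [← Real.mul_rpow hη0.le hMpos.le, ← hε, Finset.mul_sum]
    refine Finset.sum_le_sum fun i hi => ?_
    rw [← Real.mul_rpow hεpos.le (hN i).le, sq_eq_abs_rpow_rpow (r i) hp0]
    exact Real.rpow_le_rpow (mul_nonneg hεpos.le (hN i).le) ((hτ i).1 hi) hq
  -- all residual entries are bounded by the maximal weighted one
  have hrT : ∑ i, (r i) ^ 2 ≤ M ^ (2 / p) * ∑ i ∈ Sᶜ, N i ^ (2 / p) := by
    rw [← Finset.sum_subset (Finset.subset_univ Sᶜ) fun i _ hi => by
      rw [hr]; simp [hS i (by simpa using hi)], Finset.mul_sum]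
    refine Finset.sum_le_sum fun i _ => ?_
    rw [← Real.mul_rpow hMpos.le (hN i).le, sq_eq_abs_rpow_rpow (r i) hp0]
    exact Real.rpow_le_rpow (by positivity) ((div_le_iff₀ (hN i)).1 (hle i)) hq
  have hσD : σ ^ 2 * ∑ j, (x j - xs j) ^ 2 ≤ ∑ i, (r i) ^ 2 := by
    have h := pow_le_pow_left₀ (by positivity) (hσ (x - xs) hx) 2
    rw [mul_pow, Real.sq_sqrt (by positivity), Real.sq_sqrt (by positivity)] at h
    simpa [hAd] using h
  have hrfun : b - A.mulVec x = r := rfl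
  rw [hrfun, hξr] at hx'
  have hG := sum_sq_transpose_mulVec_le_sigmaMax A τ ξ fun i hi => by simp [hξτ, hi]
  rw [hξsq] at hG
  have hgd : ∑ j, A.transpose.mulVec ξ j * (x j - xs j) = -∑ i ∈ τ, (r i) ^ 2 := by
    calc ∑ j, A.transpose.mulVec ξ j * (x j - xs j)
        = A.transpose.mulVec ξ ⬝ᵥ (x - xs) := rfl
      _ = ξ ⬝ᵥ A.mulVec (x - xs) := by
        rw [Matrix.dotProduct_mulVec, ← Matrix.mulVec_transpose]
      _ = ξ ⬝ᵥ (-r) := by rw [hAd]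
      _ = _ := by rw [dotProduct_neg, hξr]
  set g := A.transpose.mulVec ξ with hgdef
  set R := ∑ i ∈ τ, (r i) ^ 2 with hR
  set G := ∑ j, (g j) ^ 2 with hGdef
  set Q := ∑ i ∈ τ, N i ^ (2 / p) with hQ
  set T := ∑ i ∈ Sᶜ, N i ^ (2 / p) with hT
  set D := ∑ j, (x j - xs j) ^ 2 with hD
  set L := sigmaMax (rowSubmatrix A τ) with hL
  have hQpos : 0 < Q :=
    Finset.sum_pos (fun i _ => Real.rpow_pos_of_pos (hN i) _) ⟨k, hkτ⟩
  have hηM : 0 < η ^ (2 / p) * M ^ (2 / p) := by positivity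
  have hRpos : 0 < R := (mul_pos hηM hQpos).trans_le hRQ
  have hGpos : 0 < G := by
    have hG0 : 0 ≤ G := Finset.sum_nonneg fun j _ => sq_nonneg _
    refine hG0.lt_of_ne' fun h0 => ?_
    have hz : ∀ j, g j = 0 := fun j => by
      have := (Finset.sum_eq_zero_iff_of_nonneg fun j _ => sq_nonneg (g j)).1 h0 j
        (Finset.mem_univ j)
      simpa using this
    simp only [hz, zero_mul, Finset.sum_const_zero] at hgd
    linarith
  have hLpos : 0 < L ^ 2 := pos_of_mul_pos_left (hGpos.trans_le hG) hRpos.le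
  have hTpos : 0 ≤ T := Finset.sum_nonneg fun i _ => (Real.rpow_pos_of_pos (hN i) _).le
  have hexp : ∑ j, (x' j - xs j) ^ 2 = D - R ^ 2 / G := by
    have : ∀ j, (x' j - xs j) ^ 2 = (x j - xs j) ^ 2 + 2 * (R / G) * (g j * (x j - xs j))
        + (R / G) ^ 2 * (g j) ^ 2 := fun j => by
      rw [hx']; simp only [Pi.add_apply, Pi.smul_apply, smul_eq_mul]; ring
    simp only [this, Finset.sum_add_distrib, ← Finset.mul_sum]
    rw [hgd, ← hD, ← hGdef]
    field_simp
    ring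
  have hgain : R / L ^ 2 ≤ R ^ 2 / G := by
    rw [div_le_div_iff₀ hLpos hGpos]
    nlinarith
  have hTdiv : σ ^ 2 * D / T ≤ M ^ (2 / p) :=
    div_le_of_le_mul₀ hTpos (by positivity) (hσD.trans hrT)
  have hβσ : β * σ ^ 2 * D ≤ R / L ^ 2 := by
    calc β * σ ^ 2 * D = η ^ (2 / p) * (σ ^ 2 * D / T) * Q / L ^ 2 := by rw [hβ]; ring
      _ ≤ η ^ (2 / p) * M ^ (2 / p) * Q / L ^ 2 := by gcongr
      _ ≤ R / L ^ 2 := by gcongr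
  rw [hexp]
  linarith
end

section
/- Let A be a real m×n matrix all of whose rows are nonzero, b ∈ ℝ^m, x ∈ ℝ^n, and let I ⊆ {1,…,m} be a nonempty index set. Define ξ = Σ_{i∈I} (b^{(i)} − A^{(i)}x) e_i and assume Aᵀξ ≠ 0. With the stepsize α = ‖ξ‖₂² ‖A_I‖_F² / ‖Aᵀξ‖₂² and weights ω_i = ‖A^{(i)}‖₂² / ‖A_I‖_F² for i ∈ I, the averaged block Kaczmarz update equals the single-vector form: x + α Σ_{i∈I} ω_i · ((b^{(i)} − A^{(i)}x)/‖A^{(i)}‖₂²) (A^{(i)})ᵀ = x + (ξᵀ(b − Ax)/‖Aᵀξ‖₂²) Aᵀξ. -/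
open Matrix Finset

/-- The averaged block Kaczmarz update with stepsize
`α = ‖ξ‖₂² ‖A_I‖_F² / ‖Aᵀξ‖₂²` and weights `ω_i = ‖A⁽ⁱ⁾‖₂² / ‖A_I‖_F²`
collapses to the single-vector form
`x + (ξᵀ(b − Ax)/‖Aᵀξ‖₂²) Aᵀξ` of the fast deterministic/greedy block Kaczmarz
method. -/
theorem fgbk_average_update_eq {m n : ℕ} (A : Matrix (Fin m) (Fin n) ℝ)
    (hA : ∀ i, A i ≠ 0) (b : Fin m → ℝ) (x : Fin n → ℝ)
    (I : Finset (Fin m)) (hI : I.Nonempty)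
    (ξ : Fin m → ℝ)
    (hξ : ξ = ∑ i ∈ I, (b i - A.mulVec x i) • (Pi.single i 1 : Fin m → ℝ))
    (hAξ : A.transpose.mulVec ξ ≠ 0)
    (α : ℝ)
    (hα : α = (∑ j, (ξ j) ^ 2) * (∑ i ∈ I, ∑ j, (A i j) ^ 2) /
      ∑ j, (A.transpose.mulVec ξ j) ^ 2)
    (ω : Fin m → ℝ)
    (hω : ∀ i ∈ I, ω i = (∑ j, (A i j) ^ 2) / ∑ i ∈ I, ∑ j, (A i j) ^ 2) :
    x + α • ∑ i ∈ I, ω i • (((b i - A.mulVec x i) / ∑ j, (A i j) ^ 2) • A i) =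
      x + ((ξ ⬝ᵥ (b - A.mulVec x)) / ∑ j, (A.transpose.mulVec ξ j) ^ 2) •
        A.transpose.mulVec ξ := by
  have hrow : ∀ i, 0 < ∑ j, (A i j) ^ 2 := fun i => by
    obtain ⟨j, hj⟩ := Function.ne_iff.mp (hA i)
    exact sum_pos' (fun _ _ => sq_nonneg _) ⟨j, mem_univ j, sq_pos_of_ne_zero hj⟩
  have hblock : 0 < ∑ i ∈ I, ∑ j, (A i j) ^ 2 := sum_pos (fun i _ => hrow i) hI
  have hξ_apply : ∀ j, ξ j = if j ∈ I then b j - A.mulVec x j else 0 := fun j => by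
    simp [hξ, Finset.sum_apply, Pi.single_apply]
  have hdot : ξ ⬝ᵥ (b - A.mulVec x) = ∑ j, (ξ j) ^ 2 := by
    refine sum_congr rfl fun j _ => ?_
    rw [hξ_apply, Pi.sub_apply]
    split_ifs <;> ring
  have hAξ_sum : A.transpose.mulVec ξ = ∑ i ∈ I, (b i - A.mulVec x i) • A i := by
    ext k
    simp [mulVec, dotProduct, hξ_apply, Finset.sum_apply, mul_comm]
  have hterm : ∑ i ∈ I, ω i • (((b i - A.mulVec x i) / ∑ j, (A i j) ^ 2) • A i) =
      (∑ i ∈ I, ∑ j, (A i j) ^ 2)⁻¹ • A.transpose.mulVec ξ := by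
    rw [hAξ_sum, smul_sum]
    refine sum_congr rfl fun i hi => ?_
    rw [hω i hi, smul_smul, smul_smul]
    congr 1
    have := (hrow i).ne'
    field_simp
  rw [hterm, smul_smul, hα, hdot]
  congr 2
  field_simp
end

section
/- Let A be a real m×n matrix (m ≥ 1) all of whose rows are nonzero, b ∈ ℝ^m, x ∈ ℝ^n with b − Ax ≠ 0, let x* satisfy Ax* = b and x − x* ∈ range(Aᵀ). Fix p ∈ [1,∞) and η ∈ (0,1], set ε = η · max_{1≤i≤m} |b^{(i)} − A^{(i)}x|^p / ‖A^{(i)}‖_p^p, τ = { i : |b^{(i)} − A^{(i)}x|^p ≥ ε‖A^{(i)}‖_p^p }, and ξ = Σ_{i∈τ} (b^{(i)} − A^{(i)}x) e_i. Then ξᵀ(b − Ax) > 0 and Aᵀξ ≠ 0. -/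
open Matrix Finset

/-- The inner product of `v` with its restriction to `s` is the sum of the squares of the entries
of `v` over `s`. -/
theorem sum_smul_single_dotProduct {ι : Type*} [Fintype ι] [DecidableEq ι]
    (s : Finset ι) (v : ι → ℝ) :
    (∑ i ∈ s, v i • (Pi.single i 1 : ι → ℝ)) ⬝ᵥ v = ∑ i ∈ s, v i ^ 2 := by
  simp [sum_dotProduct, sq]

/-- A nonzero real vector has a positive sum of `p`-th powers of absolute values. -/
theorem sum_abs_rpow_pos {ι : Type*} [Fintype ι] {v : ι → ℝ} (hv : v ≠ 0) (p : ℝ) :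
    0 < ∑ j, |v j| ^ p := by
  obtain ⟨j, hj⟩ := Function.ne_iff.mp hv
  exact sum_pos' (fun k _ => Real.rpow_nonneg (abs_nonneg _) p)
    ⟨j, mem_univ j, Real.rpow_pos_of_pos (abs_pos.mpr hj) p⟩

/-- Well-definedness of the fast greedy block Kaczmarz update: if the current
residual `b − Ax` is nonzero, then the greedy direction `ξ` satisfies
`ξᵀ(b − Ax) > 0` and `Aᵀξ ≠ 0`, so the update never divides by zero. -/
theorem fgbk_update_well_defined {m n : ℕ} (hm : 0 < m)
    (A : Matrix (Fin m) (Fin n) ℝ) (hA : ∀ i, A i ≠ 0)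
    (b : Fin m → ℝ) (x : Fin n → ℝ) (hres : b - A.mulVec x ≠ 0)
    (xs : Fin n → ℝ) (hxs : A.mulVec xs = b)
    (hx : ∃ y : Fin m → ℝ, x - xs = A.transpose.mulVec y)
    (p : ℝ) (hp : 1 ≤ p) (η : ℝ) (hη0 : 0 < η) (hη1 : η ≤ 1)
    (ε : ℝ)
    (hε : ε = η * Finset.univ.sup' ⟨⟨0, hm⟩, Finset.mem_univ _⟩
      (fun i => |b i - A.mulVec x i| ^ p / ∑ j, |A i j| ^ p))
    (τ : Finset (Fin m))
    (hτ : ∀ i, i ∈ τ ↔ |b i - A.mulVec x i| ^ p ≥ ε * ∑ j, |A i j| ^ p)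
    (ξ : Fin m → ℝ)
    (hξ : ξ = ∑ i ∈ τ, (b i - A.mulVec x i) • (Pi.single i 1 : Fin m → ℝ)) :
    0 < ξ ⬝ᵥ (b - A.mulVec x) ∧ A.transpose.mulVec ξ ≠ 0 := by
  have hp0 : p ≠ 0 := by linarith
  have hrow (i : Fin m) : 0 < ∑ j, |A i j| ^ p := sum_abs_rpow_pos (hA i) p
  obtain ⟨i, -, hi⟩ := exists_mem_eq_sup' ⟨⟨0, hm⟩, mem_univ _⟩
    (fun i => |b i - A.mulVec x i| ^ p / ∑ j, |A i j| ^ p)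
  have hmax (k : Fin m) := le_sup' (fun i => |b i - A.mulVec x i| ^ p / ∑ j, |A i j| ^ p)
    (mem_univ k)
  rw [hi] at hε
  simp only [hi] at hmax
  have hiτ : i ∈ τ := by
    rw [hτ, hε, mul_assoc, div_mul_cancel₀ _ (hrow i).ne']
    exact mul_le_of_le_one_left (Real.rpow_nonneg (abs_nonneg _) p) hη1
  have hri : b i - A.mulVec x i ≠ 0 := by
    intro h
    obtain ⟨k, hk⟩ := Function.ne_iff.mp hres
    have hpos : 0 < |b k - A.mulVec x k| ^ p / ∑ j, |A k j| ^ p :=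
      div_pos (Real.rpow_pos_of_pos (abs_pos.mpr hk) p) (hrow k)
    have hle := hmax k
    rw [h, abs_zero, Real.zero_rpow hp0, zero_div] at hle
    exact hpos.not_ge hle
  have hpos : 0 < ξ ⬝ᵥ (b - A.mulVec x) := by
    have hsum : ξ ⬝ᵥ (b - A.mulVec x) = ∑ i ∈ τ, (b - A.mulVec x) i ^ 2 :=
      hξ ▸ sum_smul_single_dotProduct τ (b - A.mulVec x)
    rw [hsum]
    exact sum_pos' (fun k _ => sq_nonneg _) ⟨i, hiτ, sq_pos_of_ne_zero hri⟩
  refine ⟨hpos, fun h => hpos.ne' ?_⟩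
  rw [← hxs, ← mulVec_sub, dotProduct_mulVec, ← mulVec_transpose, h, zero_dotProduct]
end
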